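/- Let k be a commutative ring, G a group, and H a subgroup of G. If every finitely generated subgroup of H is finite with order invertible in k, then the permutation module k[G/H] is a flat k[G]-module. -/

import Mathlib

open scoped BigOperators

/-- A module `M` over a (possibly noncommutative) ring `R` is flat, expressed via the
equational criterion for flatness (which is equivalent to exactness of the tensor
product with `M`, and makes sense over noncommutative rings). -/
def IsFlatModule (R M : Type*) [Ring R] [AddCommGroup M] [Module R M] : Prop :=
  ∀ (n : ℕ) (r : Fin n → R) (x : Fin n → M), (∑ i, r i • x i) = 0 →
    ∃ (m : ℕ) (a : Fin n → Fin m → R) (y : Fin m → M),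
      (∀ i, x i = ∑ j, a i j • y j) ∧ ∀ j, (∑ i, r i * a i j) = 0

/-! For a transitive `G`-set `X` and `x : X`, the module `k[X]` is generated by `x`. If `s : k[G]`
kills `x`, then the coefficients of `s` sum to zero over each fibre of `g ↦ g • x`. Elements `a`,
`b` of the support in the same fibre satisfy `a⁻¹ * b ∈ stabilizer G x`, and these finitely many
quotients generate a subgroup `K` such that `s` already dies in `k[G/K]`. When `K` is finite of
invertible order, its averaging idempotent `p` satisfies `p • x = x` and `s * p = 0`. For a relation
`∑ i, r i • m i = 0` with `m i = b i • x`, apply this to `s = ∑ i, r i * b i`: the coefficients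
`b i * p` solve the equational criterion. -/

section FlatCyclic

variable {R M : Type*} [Ring R] [AddCommGroup M] [Module R M]

theorem isFlatModule_of_span_singleton_eq_top {e : M} (hspan : Submodule.span R {e} = ⊤)
    (hann : ∀ s : R, s • e = 0 → ∃ p : R, p • e = e ∧ s * p = 0) : IsFlatModule R M := by
  intro n r x hx
  have hgen (i : Fin n) : ∃ b : R, b • e = x i :=
    Submodule.mem_span_singleton.1 (hspan ▸ Submodule.mem_top)
  choose b hb using hgen
  have hs : (∑ i, r i * b i) • e = 0 := by simpa only [Finset.sum_smul, mul_smul, hb] using hx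
  obtain ⟨p, hpe, hp⟩ := hann _ hs
  refine ⟨1, fun i _ => b i * p, fun _ => e, fun i => ?_, fun _ => ?_⟩
  · rw [Fin.sum_univ_one, mul_smul, hpe, hb]
  · simpa only [Finset.sum_mul, mul_assoc] using hp

end FlatCyclic

section PermutationModule

open MonoidAlgebra

theorem mapDomain_comp {R α β γ : Type*} [Semiring R] (g : β → γ) (f : α → β) (s : R[α]) :
    mapDomain (g ∘ f) s = mapDomain g (mapDomain f s) :=
  coeff_injective Finsupp.mapDomain_comp

theorem mapDomain_eq_zero_of_factorsThrough {R α β γ : Type*} [Semiring R]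
    {f : α → β} {g : α → γ} {s : R[α]}
    (hfg : ∀ a ∈ s.coeff.support, ∀ b ∈ s.coeff.support, f a = f b → g a = g b)
    (hs : mapDomain f s = 0) : mapDomain g s = 0 := by
  cases isEmpty_or_nonempty α
  · have hs0 : s = 0 := coeff_injective (Subsingleton.elim _ _)
    rw [hs0, mapDomain_zero]
  · let φ : β → γ := g ∘ Function.invFunOn f s.coeff.support
    have hφ (a : α) (ha : a ∈ s.coeff.support) : g a = φ (f a) :=
      hfg _ ha _ (Function.invFunOn_apply_mem ha) (Function.invFunOn_apply_eq ha).symm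
    calc mapDomain g s = mapDomain (φ ∘ f) s :=
          coeff_injective (Finsupp.mapDomain_congr hφ)
      _ = mapDomain φ (mapDomain f s) := mapDomain_comp φ f s
      _ = 0 := by rw [hs, mapDomain_zero]

section CosetModule

variable {k G : Type*} [Semiring k] [Group G]

theorem exists_fg_le_stabilizer_mapDomain_mk_eq_zero {X : Type*} [MulAction G X] {x : X} {s : k[G]}
    (hs : mapDomain (fun g : G => g • x) s = 0) :
    ∃ K ≤ MulAction.stabilizer G x, K.FG ∧ mapDomain (fun g : G => (g : G ⧸ K)) s = 0 := by
  let ratios : Set G := Set.image2 (fun a b => a⁻¹ * b) s.coeff.support s.coeff.support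
  let T : Set G := ratios ∩ MulAction.stabilizer G x
  have hT : T.Finite :=
    (s.coeff.support.finite_toSet.image2 _ s.coeff.support.finite_toSet).inter_of_left _
  refine ⟨Subgroup.closure T, (Subgroup.closure_le _).2 Set.inter_subset_right,
    (Subgroup.fg_iff _).2 ⟨T, rfl, hT⟩,
    mapDomain_eq_zero_of_factorsThrough (fun a ha b hb hab => ?_) hs⟩
  have hstab : a⁻¹ * b ∈ MulAction.stabilizer G x := by
    rw [MulAction.mem_stabilizer_iff, mul_smul, ← hab, inv_smul_smul]
  exact QuotientGroup.eq.2 (Subgroup.subset_closure ⟨Set.mem_image2_of_mem ha hb, hstab⟩)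

theorem smul_eq_zero_of_mapDomain_mk_eq_zero {M : Type*} [AddCommMonoid M] [Module k[G] M]
    {K : Subgroup G} {m : M} (hm : ∀ h ∈ K, single h (1 : k) • m = m) {s : k[G]}
    (hs : mapDomain (fun g : G => (g : G ⧸ K)) s = 0) : s • m = 0 := by
  have smul_eq (z : k[G]) : z • m =
      (mapDomain (fun g : G => (g : G ⧸ K)) z).coeff.sum fun q t => single q.out t • m := by
    induction z using MonoidAlgebra.induction_linear with
    | zero => simp
    | add y z hy hz =>
      rw [add_smul, hy, hz, mapDomain_add, coeff_add, Finsupp.sum_add_index'] <;>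
        simp [add_smul]
    | single g t =>
      have hg : (g : G ⧸ K).out⁻¹ * g ∈ K := QuotientGroup.eq.1 (QuotientGroup.out_eq' _)
      calc single g t • m
          = single (g : G ⧸ K).out t • single ((g : G ⧸ K).out⁻¹ * g) (1 : k) • m := by
            rw [← mul_smul, single_mul_single, mul_inv_cancel_left, mul_one]
        _ = _ := by simp [hm _ hg]
  rw [smul_eq, hs, coeff_zero, Finsupp.sum_zero_index]

end CosetModule

section SubgroupAverage

variable (k : Type*) {G : Type*} [CommSemiring k] [Group G] (K : Subgroup G) [Fintype K]
  [Invertible (Fintype.card K : k)]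

/-- The averaging idempotent `|K|⁻¹ ∑ h ∈ K, h` of a finite subgroup `K ≤ G` with invertible order,
as an element of `k[G]`. -/
noncomputable def subgroupAverage : k[G] :=
  mapDomainRingHom k K.subtype (GroupAlgebra.average k K)

variable {k K}

theorem single_mul_subgroupAverage {h : G} (hh : h ∈ K) :
    single h 1 * subgroupAverage k K = subgroupAverage k K := by
  have hsingle : single h (1 : k) = mapDomainRingHom k K.subtype (single ⟨h, hh⟩ 1) := by simp
  rw [subgroupAverage, hsingle, ← map_mul, GroupAlgebra.mul_average_left]

theorem subgroupAverage_smul {M : Type*} [AddCommMonoid M] [Module k[G] M] {m : M}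
    (hm : ∀ h ∈ K, single h (1 : k) • m = m) : subgroupAverage k K • m = m := by
  have eq_sum : subgroupAverage k K =
      single 1 ⅟(Fintype.card K : k) * ∑ h : K, single (h : G) 1 := by
    simp [subgroupAverage, GroupAlgebra.average, Finset.mul_sum, Finset.smul_sum]
  have hsum : ∑ h : K, single (h : G) (1 : k) • m = single (1 : G) (Fintype.card K : k) • m := by
    simp [hm _ (SetLike.coe_mem _), ← Nat.cast_smul_eq_nsmul k[G], natCast_def]
  rw [eq_sum, mul_smul, Finset.sum_smul, hsum, ← mul_smul, single_mul_single, invOf_mul_self,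
    one_mul, ← one_def, one_smul]

end SubgroupAverage

section PointVector

variable (k G : Type*) {X : Type*} [CommSemiring k]

/-- The basis vector of the permutation module `k[X]` at the point `x`, transported to the
`k[G]`-module `asModule`; it generates `k[X]` when the action is transitive. -/
noncomputable def pointVector [Monoid G] [MulAction G X] (x : X) :
    (Representation.ofMulAction k G X).asModule :=
  (Representation.ofMulAction k G X).asModuleEquiv.symm (single x 1)

variable {k G} [Monoid G] [MulAction G X]

theorem asModuleEquiv_smul_pointVector (s : k[G]) (x : X) :
    (Representation.ofMulAction k G X).asModuleEquiv (s • pointVector k G x) =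
      mapDomain (fun g : G => g • x) s := by
  rw [Representation.asModuleEquiv_map_smul, pointVector, LinearEquiv.apply_symm_apply]
  induction s using MonoidAlgebra.induction_linear with
  | zero => simp
  | add y z hy hz => rw [map_add, LinearMap.add_apply, hy, hz, mapDomain_add]
  | single g t => simp [Representation.ofMulAction_single]

theorem single_smul_pointVector (g : G) (x : X) :
    single g (1 : k) • pointVector k G x = pointVector k G (g • x) := by
  apply (Representation.ofMulAction k G X).asModuleEquiv.injective
  rw [asModuleEquiv_smul_pointVector, mapDomain_single, pointVector, LinearEquiv.apply_symm_apply]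

theorem span_pointVector_eq_top [MulAction.IsPretransitive G X] (x : X) :
    Submodule.span k[G] {pointVector k G x} = ⊤ := by
  refine Submodule.eq_top_iff'.2 fun v => Submodule.mem_span_singleton.2 ?_
  choose τ hτ using MulAction.exists_smul_eq G x
  have hsection : (fun g : G => g • x) ∘ τ = id := funext hτ
  refine ⟨mapDomain τ ((Representation.ofMulAction k G X).asModuleEquiv v),
    (Representation.ofMulAction k G X).asModuleEquiv.injective ?_⟩
  rw [asModuleEquiv_smul_pointVector, ← mapDomain_comp, hsection]
  exact coeff_injective Finsupp.mapDomain_id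

end PointVector

theorem permutation_module_flat_of_locally_unit_finite_general
    {k G X : Type*} [CommRing k] [Group G] [MulAction G X] [MulAction.IsPretransitive G X] (x : X)
    (hloc : ∀ K ≤ MulAction.stabilizer G x, K.FG → Finite K ∧ IsUnit (Nat.card K : k)) :
    IsFlatModule k[G] (Representation.ofMulAction k G X).asModule := by
  refine isFlatModule_of_span_singleton_eq_top (span_pointVector_eq_top x) fun s hs => ?_
  have hs' : mapDomain (fun g : G => g • x) s = 0 := by
    rw [← asModuleEquiv_smul_pointVector, hs, map_zero]
  obtain ⟨K, hKx, hfg, hsK⟩ := exists_fg_le_stabilizer_mapDomain_mk_eq_zero hs'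
  obtain ⟨_, hunit⟩ := hloc K hKx hfg
  have : Fintype K := Fintype.ofFinite K
  rw [Nat.card_eq_fintype_card] at hunit
  have : Invertible (Fintype.card K : k) := hunit.invertible
  have hfixed (h : G) (hh : h ∈ K) : single h (1 : k) • pointVector k G x = pointVector k G x := by
    rw [single_smul_pointVector, MulAction.mem_stabilizer_iff.1 (hKx hh)]
  exact ⟨subgroupAverage k K, subgroupAverage_smul hfixed,
    smul_eq_zero_of_mapDomain_mk_eq_zero (fun _ => single_mul_subgroupAverage) hsK⟩

end PermutationModule

/-- Let `k` be a commutative ring, `G` a group, `H ≤ G` a subgroup.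
If every finitely generated subgroup of `H` is finite with order invertible in `k`,
then the permutation module `k[G/H]` is a flat `k[G]`-module. -/
theorem permutation_module_flat_of_locally_unit_finite
    (k G : Type*) [CommRing k] [Group G] (H : Subgroup G)
    (hloc : ∀ K : Subgroup G, K ≤ H → K.FG → Finite K ∧ IsUnit (Nat.card K : k)) :
    IsFlatModule (MonoidAlgebra k G)
      (Representation.ofMulAction k G (G ⧸ H)).asModule := by
  rw [← MulAction.stabilizer_quotient H] at hloc
  exact permutation_module_flat_of_locally_unit_finite_general ((1 : G) : G ⧸ H) hloc
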